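/- arXiv:2411.05716 — 10 statements merged into one kernel-verified Lean document; each statement's English description precedes it below -/
import Mathlib

section
/- Let S be a left-symmetric dialgebra over a field K and let ρ, τ, σ ∈ K. If d₁ and d₂ are both (ρ,τ,σ)-derivations of S, then the commutator [d₁,d₂] = d₁ ∘ d₂ − d₂ ∘ d₁ is a (ρ²,τ²,σ²)-derivation of S. -/
noncomputable section

/-- `d` is a `(ρ,τ,σ)`-derivation of the algebra `(S, la, ra)`, where `la` is the
left product `⊣` and `ra` is the right product `⊢`. -/
def IsDer {K : Type*} [CommRing K] {S : Type*} [AddCommGroup S] [Module K S]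
    (la ra : S →ₗ[K] S →ₗ[K] S) (ρ τ σ : K) (d : S →ₗ[K] S) : Prop :=
  (∀ p q : S, ρ • d (la p q) = τ • la (d p) q + σ • la p (d q)) ∧
  (∀ p q : S, ρ • d (ra p q) = τ • ra (d p) q + σ • ra p (d q))

/-- The one-product condition that `IsDer` imposes on each of `⊣` and `⊢`: `d` is a
`(ρ,τ,σ)`-derivation of the bilinear product `m`. -/
def IsMulDer {K : Type*} [CommSemiring K] {S : Type*} [AddCommMonoid S] [Module K S]
    (m : S →ₗ[K] S →ₗ[K] S) (ρ τ σ : K) (d : S →ₗ[K] S) : Prop :=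
  ∀ p q : S, ρ • d (m p q) = τ • m (d p) q + σ • m p (d q)

section Semiring

variable {K : Type*} [CommSemiring K] {S : Type*} [AddCommMonoid S] [Module K S]
  {m : S →ₗ[K] S →ₗ[K] S} {ρ₁ τ₁ σ₁ ρ₂ τ₂ σ₂ : K} {d₁ d₂ : S →ₗ[K] S}

theorem IsMulDer.smul_apply_apply (h₁ : IsMulDer m ρ₁ τ₁ σ₁ d₁) (h₂ : IsMulDer m ρ₂ τ₂ σ₂ d₂)
    (p q : S) :
    (ρ₁ * ρ₂) • d₁ (d₂ (m p q)) =
      (τ₁ * τ₂) • m (d₁ (d₂ p)) q + (σ₁ * τ₂) • m (d₂ p) (d₁ q) +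
        (τ₁ * σ₂) • m (d₁ p) (d₂ q) + (σ₁ * σ₂) • m p (d₁ (d₂ q)) :=
  calc
    (ρ₁ * ρ₂) • d₁ (d₂ (m p q)) = ρ₁ • d₁ (ρ₂ • d₂ (m p q)) := by
      rw [map_smul, mul_smul]
    _ = τ₂ • ρ₁ • d₁ (m (d₂ p) q) + σ₂ • ρ₁ • d₁ (m p (d₂ q)) := by
      rw [h₂ p q, map_add, map_smul, map_smul, smul_add, smul_comm ρ₁, smul_comm ρ₁]
    _ = τ₂ • (τ₁ • m (d₁ (d₂ p)) q + σ₁ • m (d₂ p) (d₁ q)) +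
          σ₂ • (τ₁ • m (d₁ p) (d₂ q) + σ₁ • m p (d₁ (d₂ q))) := by
      rw [h₁ (d₂ p) q, h₁ p (d₂ q)]
    _ = _ := by module

end Semiring

section Ring

variable {K : Type*} [CommRing K] {S : Type*} [AddCommGroup S] [Module K S]
  {ρ₁ τ₁ σ₁ ρ₂ τ₂ σ₂ : K} {d₁ d₂ : S →ₗ[K] S}

-- The mixed terms `m (d₂ p) (d₁ q)` and `m (d₁ p) (d₂ q)` have the same coefficients, `σ₁ * τ₂`
-- and `τ₁ * σ₂`, in both orders of composition, so they cancel in the commutator.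
theorem IsMulDer.commutator {m : S →ₗ[K] S →ₗ[K] S}
    (h₁ : IsMulDer m ρ₁ τ₁ σ₁ d₁) (h₂ : IsMulDer m ρ₂ τ₂ σ₂ d₂) :
    IsMulDer m (ρ₁ * ρ₂) (τ₁ * τ₂) (σ₁ * σ₂) (d₁ ∘ₗ d₂ - d₂ ∘ₗ d₁) := by
  intro p q
  have h₁₂ := h₁.smul_apply_apply h₂ p q
  have h₂₁ := h₂.smul_apply_apply h₁ p q
  rw [mul_comm ρ₂ ρ₁] at h₂₁
  simp only [LinearMap.sub_apply, LinearMap.comp_apply, smul_sub, map_sub, h₁₂, h₂₁]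
  module

theorem commutator_isDer_general {la ra : S →ₗ[K] S →ₗ[K] S}
    (h₁ : IsDer la ra ρ₁ τ₁ σ₁ d₁) (h₂ : IsDer la ra ρ₂ τ₂ σ₂ d₂) :
    IsDer la ra (ρ₁ * ρ₂) (τ₁ * τ₂) (σ₁ * σ₂) (d₁ ∘ₗ d₂ - d₂ ∘ₗ d₁) :=
  ⟨IsMulDer.commutator h₁.1 h₂.1, IsMulDer.commutator h₁.2 h₂.2⟩

end Ring

theorem commutator_isDer {K : Type*} [Field K] {S : Type*} [AddCommGroup S] [Module K S]
    (la ra : S →ₗ[K] S →ₗ[K] S)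
    (hax1 : ∀ p q r : S, la p (la q r) = la p (ra q r))
    (hax2 : ∀ p q r : S, ra (ra p q) r = ra (la p q) r)
    (hax3 : ∀ p q r : S, la p (la q r) - la (la p q) r = ra q (la p r) - la (ra q p) r)
    (hax4 : ∀ p q r : S, ra p (ra q r) - ra (ra p q) r = ra q (ra p r) - ra (ra q p) r)
    (ρ τ σ : K) (d₁ d₂ : S →ₗ[K] S)
    (hd₁ : IsDer la ra ρ τ σ d₁) (hd₂ : IsDer la ra ρ τ σ d₂) :
    IsDer la ra (ρ ^ 2) (τ ^ 2) (σ ^ 2) (d₁ ∘ₗ d₂ - d₂ ∘ₗ d₁) := by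
  simpa only [sq] using commutator_isDer_general hd₁ hd₂
end
end

section
/- Let a, b ∈ ℂ with a ≠ 0 and b ≠ 0, and let L¹₂(a,b) be the left-symmetric dialgebra on ℂ² with basis e₁, e₂ and products e₁ ⊣ e₂ = e₁, e₂ ⊣ e₂ = e₂, e₂ ⊢ e₁ = a·e₁, e₂ ⊢ e₂ = b·e₁ + e₂ (all other basis products zero). Then a linear map d : ℂ² → ℂ² is a (1,1,1)-derivation of L¹₂(a,b) if and only if its matrix in the basis (e₁,e₂) has the form [[t·(a−1)/b, t],[0, 0]] for some t ∈ ℂ; in particular Der_{(1,1,1)}L¹₂(a,b) has dimension 1. -/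
noncomputable section

/-- The space `Der_{(ρ,τ,σ)} S` of `(ρ,τ,σ)`-derivations, as a submodule of `End S`. -/
def DerSub {K : Type*} [CommRing K] {S : Type*} [AddCommGroup S] [Module K S]
    (la ra : S →ₗ[K] S →ₗ[K] S) (ρ τ σ : K) : Submodule K (S →ₗ[K] S) where
  carrier := {d | IsDer la ra ρ τ σ d}
  zero_mem' := ⟨fun p q => by simp, fun p q => by simp⟩
  add_mem' := by
    rintro d₁ d₂ h₁ h₂
    refine ⟨fun p q => ?_, fun p q => ?_⟩
    · have a1 := h₁.1 p q; have a2 := h₂.1 p q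
      simp only [LinearMap.add_apply, map_add, smul_add]
      rw [a1, a2]; abel
    · have a1 := h₁.2 p q; have a2 := h₂.2 p q
      simp only [LinearMap.add_apply, map_add, smul_add]
      rw [a1, a2]; abel
  smul_mem' := by
    rintro c d h
    refine ⟨fun p q => ?_, fun p q => ?_⟩
    · simp only [LinearMap.smul_apply, map_smul]
      rw [smul_comm ρ c, h.1 p q, smul_add, smul_comm τ c, smul_comm σ c]
    · simp only [LinearMap.smul_apply, map_smul]
      rw [smul_comm ρ c, h.2 p q, smul_add, smul_comm τ c, smul_comm σ c]

/-- The left product `⊣` of the dialgebra, extended bilinearly from its values on the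
basis `e₁ = (1,0)`, `e₂ = (0,1)` of `ℂ²`. -/
def L1l (a b : ℂ) : (ℂ × ℂ) →ₗ[ℂ] (ℂ × ℂ) →ₗ[ℂ] (ℂ × ℂ) :=
  LinearMap.mk₂ ℂ (fun p q => (p.1 * q.2, p.2 * q.2))
    (by intros; ext <;> simp <;> ring)
    (by intros; ext <;> simp <;> ring)
    (by intros; ext <;> simp <;> ring)
    (by intros; ext <;> simp <;> ring)

/-- The right product `⊢` of the dialgebra, extended bilinearly from its values on the
basis `e₁ = (1,0)`, `e₂ = (0,1)` of `ℂ²`. -/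
def L1r (a b : ℂ) : (ℂ × ℂ) →ₗ[ℂ] (ℂ × ℂ) →ₗ[ℂ] (ℂ × ℂ) :=
  LinearMap.mk₂ ℂ (fun p q => (a * p.2 * q.1 + b * p.2 * q.2, p.2 * q.2))
    (by intros; ext <;> simp <;> ring)
    (by intros; ext <;> simp <;> ring)
    (by intros; ext <;> simp <;> ring)
    (by intros; ext <;> simp <;> ring)

/-!
Test the derivation identity on pairs of basis vectors. For `⊣`, the pairs `(e₁, e₁)` and
`(e₂, e₂)` force `d e₁ = (x, 0)` and `d e₂ = (t, 0)`; for `⊢`, the pair `(e₂, e₂)` then gives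
`b x = (a - 1) t`, and every other pair is automatic. When `(a - 1, b) ≠ (0, 0)` this single linear
equation says that `(x, t)` is a multiple of `(a - 1, b)`.
-/

theorem leibniz_iff_forall_basis {K S ι : Type*} [CommSemiring K] [AddCommMonoid S] [Module K S]
    (v : Module.Basis ι K S) (m : S →ₗ[K] S →ₗ[K] S) (ρ τ σ : K) (d : S →ₗ[K] S) :
    (∀ p q, ρ • d (m p q) = τ • m (d p) q + σ • m p (d q)) ↔
      ∀ i j, ρ • d (m (v i) (v j)) = τ • m (d (v i)) (v j) + σ • m (v i) (d (v j)) := by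
  refine ⟨fun h i j => h (v i) (v j), fun h => ?_⟩
  have bilinear_eq : ρ • m.compr₂ d = τ • (m ∘ₗ d) + σ • m.compl₂ d := LinearMap.ext_basis v v h
  exact LinearMap.congr_fun₂ bilinear_eq

theorem isDer_iff_forall_basis {K S ι : Type*} [CommRing K] [AddCommGroup S] [Module K S]
    (v : Module.Basis ι K S) (la ra : S →ₗ[K] S →ₗ[K] S) (ρ τ σ : K) (d : S →ₗ[K] S) :
    IsDer la ra ρ τ σ d ↔
      (∀ i j, ρ • d (la (v i) (v j)) = τ • la (d (v i)) (v j) + σ • la (v i) (d (v j))) ∧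
      (∀ i j, ρ • d (ra (v i) (v j)) = τ • ra (d (v i)) (v j) + σ • ra (v i) (d (v j))) :=
  and_congr (leibniz_iff_forall_basis v la ρ τ σ d) (leibniz_iff_forall_basis v ra ρ τ σ d)

theorem mul_eq_mul_iff_exists_eq_mul {K : Type*} [Field K] {m b : K} (h : m ≠ 0 ∨ b ≠ 0)
    (x t : K) : b * x = m * t ↔ ∃ c, x = c * m ∧ t = c * b := by
  constructor
  · intro hxt
    rcases h with hm | hb
    · exact ⟨x / m, by field_simp, by field_simp; linear_combination -hxt⟩
    · exact ⟨t / b, by field_simp; linear_combination hxt, by field_simp⟩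
  · rintro ⟨c, rfl, rfl⟩
    ring

theorem map_eq_fst_smul_add_snd_smul {K M : Type*} [Semiring K] [AddCommMonoid M] [Module K M]
    (d : K × K →ₗ[K] M) (p : K × K) : d p = p.1 • d (1, 0) + p.2 • d (0, 1) := by
  simp [← map_smul, ← map_add]

section Dialgebra

variable (a b : ℂ)

theorem L1l_apply (p q : ℂ × ℂ) : L1l a b p q = (p.1 * q.2, p.2 * q.2) := rfl

theorem L1r_apply (p q : ℂ × ℂ) :
    L1r a b p q = (a * p.2 * q.1 + b * p.2 * q.2, p.2 * q.2) := rfl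

theorem isDer_one_one_one_L1_iff_entries (d : (ℂ × ℂ) →ₗ[ℂ] (ℂ × ℂ)) :
    IsDer (L1l a b) (L1r a b) 1 1 1 d ↔
      (d (1, 0)).2 = 0 ∧ (d (0, 1)).2 = 0 ∧ b * (d (1, 0)).1 = (a - 1) * (d (0, 1)).1 := by
  rw [isDer_iff_forall_basis (Module.Basis.finTwoProd ℂ)]
  have d_apply := map_eq_fst_smul_add_snd_smul d
  generalize d (1, 0) = de₁, d (0, 1) = de₂ at d_apply ⊢
  obtain ⟨x, z⟩ := de₁
  obtain ⟨t, w⟩ := de₂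
  constructor
  · rintro ⟨leibniz_l, leibniz_r⟩
    have hz : z = 0 := by
      simpa [d_apply, L1l_apply] using (congrArg Prod.fst (leibniz_l 0 0)).symm
    have hw : w = 0 := by simpa [d_apply, L1l_apply] using leibniz_l 1 1
    have hxt : b * x + t = a * t := by
      simpa [d_apply, L1r_apply, hz, hw] using leibniz_r 1 1
    exact ⟨hz, hw, by linear_combination hxt⟩
  · rintro ⟨rfl, rfl, h⟩
    have hxt : b * x + t = a * t := by linear_combination h
    simp [Fin.forall_fin_two, d_apply, L1l_apply, L1r_apply, hxt]

/-- The derivation with matrix `[[a - 1, b], [0, 0]]` in the basis `(e₁, e₂)`. This scaling, rather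
than that of `[[(a - 1) / b, 1], [0, 0]]`, makes sense for `b = 0` as well. -/
def L1DerGenerator : (ℂ × ℂ) →ₗ[ℂ] (ℂ × ℂ) :=
  LinearMap.inl ℂ ℂ ℂ ∘ₗ ((a - 1) • LinearMap.fst ℂ ℂ ℂ + b • LinearMap.snd ℂ ℂ ℂ)

theorem smul_L1DerGenerator_eq_iff (t : ℂ) (d : (ℂ × ℂ) →ₗ[ℂ] (ℂ × ℂ)) :
    t • L1DerGenerator a b = d ↔ d (1, 0) = (t * (a - 1), 0) ∧ d (0, 1) = (t * b, 0) := by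
  constructor
  · rintro rfl
    simp [L1DerGenerator]
  · rintro ⟨map_e₁, map_e₂⟩
    ext <;> simp [L1DerGenerator, map_e₁, map_e₂]

variable {a b}

theorem L1DerGenerator_ne_zero (h : a ≠ 1 ∨ b ≠ 0) : L1DerGenerator a b ≠ 0 := by
  intro h0
  have map_e₁ : a - 1 = 0 := by
    simpa [L1DerGenerator] using congrArg Prod.fst (LinearMap.congr_fun h0 (1, 0))
  have map_e₂ : b = 0 := by
    simpa [L1DerGenerator] using congrArg Prod.fst (LinearMap.congr_fun h0 (0, 1))
  exact h.elim (· (sub_eq_zero.mp map_e₁)) (· map_e₂)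

theorem isDer_one_one_one_L1_iff_exists (h : a ≠ 1 ∨ b ≠ 0) (d : (ℂ × ℂ) →ₗ[ℂ] (ℂ × ℂ)) :
    IsDer (L1l a b) (L1r a b) 1 1 1 d ↔
      ∃ t : ℂ, d (1, 0) = (t * (a - 1), 0) ∧ d (0, 1) = (t * b, 0) := by
  rw [isDer_one_one_one_L1_iff_entries, mul_eq_mul_iff_exists_eq_mul (h.imp_left sub_ne_zero.mpr)]
  simp only [Prod.ext_iff]
  grind

theorem derSub_one_one_one_L1_eq_span (h : a ≠ 1 ∨ b ≠ 0) :
    DerSub (L1l a b) (L1r a b) 1 1 1 = Submodule.span ℂ {L1DerGenerator a b} := by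
  ext d
  simp only [Submodule.mem_span_singleton, smul_L1DerGenerator_eq_iff]
  exact isDer_one_one_one_L1_iff_exists h d

end Dialgebra

theorem L1_der_one_one_one_general (a b : ℂ) (h : a ≠ 1 ∨ b ≠ 0) :
    (∀ d : (ℂ × ℂ) →ₗ[ℂ] (ℂ × ℂ), IsDer (L1l a b) (L1r a b) 1 1 1 d ↔
      ∃ t : ℂ, d (1, 0) = (t * (a - 1), 0) ∧ d (0, 1) = (t * b, 0)) ∧
    Module.finrank ℂ (DerSub (L1l a b) (L1r a b) 1 1 1) = 1 := by
  refine ⟨isDer_one_one_one_L1_iff_exists h, ?_⟩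
  rw [derSub_one_one_one_L1_eq_span h, finrank_span_singleton (L1DerGenerator_ne_zero h)]

theorem L1_der_one_one_one (a b : ℂ) (ha : a ≠ 0) (hb : b ≠ 0) :
    (∀ d : (ℂ × ℂ) →ₗ[ℂ] (ℂ × ℂ), IsDer (L1l a b) (L1r a b) 1 1 1 d ↔
      ∃ t : ℂ, d ((1 : ℂ), (0 : ℂ)) = (t * (a - 1) / b, 0) ∧ d ((0 : ℂ), (1 : ℂ)) = (t, 0)) ∧
    Module.finrank ℂ (DerSub (L1l a b) (L1r a b) 1 1 1) = 1 := by
  have ⟨isDer_iff, finrank_eq⟩ := L1_der_one_one_one_general a b (Or.inr hb)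
  refine ⟨fun d => ?_, finrank_eq⟩
  rw [(mul_right_surjective₀ hb).exists]
  simpa only [mul_right_comm _ b, mul_div_cancel_right₀ _ hb] using isDer_iff d
end
end

section
/- Let a, b ∈ ℂ with a ≠ 0, and let L¹₂(a,b) be the left-symmetric dialgebra on ℂ² with basis e₁, e₂ and products e₁ ⊣ e₂ = e₁, e₂ ⊣ e₂ = e₂, e₂ ⊢ e₁ = a·e₁, e₂ ⊢ e₂ = b·e₁ + e₂ (all other basis products zero). Then the only (0,1,1)-derivation of L¹₂(a,b) is the zero map, i.e., Der_{(0,1,1)}L¹₂(a,b) = {0}. -/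
noncomputable section

/-! A `(0,τ,σ)`-derivation `d` satisfies `τ (d p ⊣ q) + σ (p ⊣ d q) = 0`. In `L¹₂(a,b)` the left
product is `p ⊣ q = f(q) p`, where `f` is the second coordinate, so `τ f(q) d p + σ f(d q) p = 0`.
Applying `f` with `p = q = e₂` gives `(τ + σ) f(d e₂) = 0`; once `f(d e₂) = 0`, the relation
with `q = e₂` reads `τ d p = 0`. -/

namespace IsDer

variable {K S : Type*} [CommRing K] [AddCommGroup S] [Module K S]

theorem zero (la ra : S →ₗ[K] S →ₗ[K] S) (ρ τ σ : K) : IsDer la ra ρ τ σ 0 := by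
  constructor <;> intro p q <;> simp

variable {la ra : S →ₗ[K] S →ₗ[K] S} {τ σ : K} {d : S →ₗ[K] S} {f : S →ₗ[K] K}

theorem smul_add_smul_eq_zero (hd : IsDer la ra 0 τ σ d) (hla : ∀ p q, la p q = f q • p)
    (p q : S) : (τ * f q) • d p + (σ * f (d q)) • p = 0 := by
  simpa only [hla, zero_smul, smul_smul] using (hd.1 p q).symm

variable [IsDomain K]

theorem functional_apply_eq_zero (hd : IsDer la ra 0 τ σ d) (hla : ∀ p q, la p q = f q • p)
    (hτσ : τ + σ ≠ 0) {u : S} (hu : f u ≠ 0) : f (d u) = 0 := by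
  have hfu : τ * f u * f (d u) + σ * f (d u) * f u = 0 := by
    simpa only [map_add, map_smul, smul_eq_mul, map_zero] using
      congrArg f (hd.smul_add_smul_eq_zero hla u u)
  have hmul : (τ + σ) * f u * f (d u) = 0 := by linear_combination hfu
  exact (mul_eq_zero.mp hmul).resolve_left (mul_ne_zero hτσ hu)

theorem eq_zero_of_left_eq_smul [Module.IsTorsionFree K S] (hd : IsDer la ra 0 τ σ d)
    (hla : ∀ p q, la p q = f q • p) (hf : f ≠ 0) (hτ : τ ≠ 0) (hτσ : τ + σ ≠ 0) : d = 0 := by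
  obtain ⟨u, hu⟩ := DFunLike.ne_iff.mp hf
  have hfdu : f (d u) = 0 := hd.functional_apply_eq_zero hla hτσ hu
  ext p
  have hdp : (τ * f u) • d p = 0 := by
    simpa only [hfdu, mul_zero, zero_smul, add_zero] using hd.smul_add_smul_eq_zero hla p u
  exact (smul_eq_zero.mp hdp).resolve_left (mul_ne_zero hτ hu)

end IsDer

theorem L1l_apply_eq_snd_smul (a b : ℂ) (p q : ℂ × ℂ) :
    L1l a b p q = LinearMap.snd ℂ ℂ ℂ q • p := by
  ext <;> simp [L1l, mul_comm]

theorem L1_der_zero_one_one_general (a b : ℂ) {τ σ : ℂ} (hτ : τ ≠ 0) (hτσ : τ + σ ≠ 0)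
    (d : (ℂ × ℂ) →ₗ[ℂ] (ℂ × ℂ)) : IsDer (L1l a b) (L1r a b) 0 τ σ d ↔ d = 0 := by
  have snd_ne_zero : LinearMap.snd ℂ ℂ ℂ ≠ 0 := DFunLike.ne_iff.mpr ⟨(0, 1), by simp⟩
  constructor
  · intro hd
    exact hd.eq_zero_of_left_eq_smul (L1l_apply_eq_snd_smul a b) snd_ne_zero hτ hτσ
  · rintro rfl
    exact IsDer.zero _ _ _ _ _

theorem L1_der_zero_one_one (a b : ℂ) (ha : a ≠ 0) :
    (∀ d : (ℂ × ℂ) →ₗ[ℂ] (ℂ × ℂ), IsDer (L1l a b) (L1r a b) 0 1 1 d ↔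
      d = 0) :=
  L1_der_zero_one_one_general a b one_ne_zero (by norm_num)
end
end

section
/- Let b, c ∈ ℂ with c ≠ 0, and let L²₂(b,c) be the left-symmetric dialgebra on ℂ² with basis e₁, e₂ and products e₁ ⊣ e₂ = e₁, e₂ ⊣ e₂ = c·e₁ + e₂, e₂ ⊢ e₂ = b·e₁ + e₂ (all other basis products zero). Then the only (1,1,1)-derivation of L²₂(b,c) is the zero map, i.e., Der_{(1,1,1)}L²₂(b,c) = {0}. -/
noncomputable section

/-- The left product `⊣` of the dialgebra, extended bilinearly from its values on the
basis `e₁ = (1,0)`, `e₂ = (0,1)` of `ℂ²`. -/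
def L2l (b c : ℂ) : (ℂ × ℂ) →ₗ[ℂ] (ℂ × ℂ) →ₗ[ℂ] (ℂ × ℂ) :=
  LinearMap.mk₂ ℂ (fun p q => (p.1 * q.2 + c * p.2 * q.2, p.2 * q.2))
    (by intros; ext <;> simp <;> ring)
    (by intros; ext <;> simp <;> ring)
    (by intros; ext <;> simp <;> ring)
    (by intros; ext <;> simp <;> ring)

/-- The right product `⊢` of the dialgebra, extended bilinearly from its values on the
basis `e₁ = (1,0)`, `e₂ = (0,1)` of `ℂ²`. -/
def L2r (b c : ℂ) : (ℂ × ℂ) →ₗ[ℂ] (ℂ × ℂ) →ₗ[ℂ] (ℂ × ℂ) :=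
  LinearMap.mk₂ ℂ (fun p q => (b * p.2 * q.2, p.2 * q.2))
    (by intros; ext <;> simp <;> ring)
    (by intros; ext <;> simp <;> ring)
    (by intros; ext <;> simp <;> ring)
    (by intros; ext <;> simp <;> ring)

/-!
The vector `u = (b, 1)` satisfies `x ⊢ u = u ⊢ x = x.2 • u`; in particular it is idempotent for `⊢`.
If `ρ ≠ 0`, a derivation `d` therefore maps `u` to a multiple `t • u` with `ρ t = (τ + σ) t`, so
`d u = 0` when moreover `ρ ≠ τ + σ`. Then `d` also kills `u ⊣ u = u + c • e₁`, and `u`, `u ⊣ u` form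
a basis of `ℂ²` because `c ≠ 0`.
-/

section Module

variable {K S : Type*} [CommRing K] [AddCommGroup S] [Module K S]
  {la ra : S →ₗ[K] S →ₗ[K] S} {ρ τ σ : K} {d : S →ₗ[K] S}

theorem isDer_zero : IsDer la ra ρ τ σ 0 := by
  simp [IsDer]

variable [IsDomain K] [Module.IsTorsionFree K S]

theorem IsDer.map_la_eq_zero (hd : IsDer la ra ρ τ σ d) (hρ : ρ ≠ 0) {p q : S}
    (hp : d p = 0) (hq : d q = 0) : d (la p q) = 0 := by
  have hder : ρ • d (la p q) = 0 := by simpa [hp, hq] using hd.1 p q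
  exact (smul_eq_zero_iff_right hρ).mp hder

theorem IsDer.map_eq_zero_of_ra_eq_smul (hd : IsDer la ra ρ τ σ d) (hρ : ρ ≠ 0) (hne : ρ ≠ τ + σ)
    {φ : Module.Dual K S} {u : S} (hφu : φ u = 1) (hleft : ∀ x, ra x u = φ x • u)
    (hright : ∀ x, ra u x = φ x • u) : d u = 0 := by
  have hder : ρ • d u = ((τ + σ) * φ (d u)) • u := by
    simpa [hleft, hright, hφu, add_mul, add_smul, mul_smul] using hd.2 u u
  have hφ : ρ * φ (d u) = (τ + σ) * φ (d u) := by
    simpa [hφu] using congrArg φ hder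
  have hφ_zero : φ (d u) = 0 := by
    by_contra h
    exact hne (mul_right_cancel₀ h hφ)
  have hρ_smul : ρ • d u = 0 := by simpa [hφ_zero] using hder
  exact (smul_eq_zero_iff_right hρ).mp hρ_smul

theorem linearMap_eq_zero_of_map_mk_one_eq_zero {f : K × K →ₗ[K] S} {a b : K} (hab : a ≠ b)
    (ha : f (a, 1) = 0) (hb : f (b, 1) = 0) : f = 0 := by
  have hfst : f (1, 0) = 0 := by
    have hsmul : (a - b) • f (1, 0) = f (a, 1) - f (b, 1) := by
      rw [← map_smul, ← map_sub]
      simp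
    rw [ha, hb, sub_zero] at hsmul
    exact (smul_eq_zero_iff_right (sub_ne_zero.mpr hab)).mp hsmul
  have hsnd : f (0, 1) = 0 := by
    have hsub : f (0, 1) = f (a, 1) - a • f (1, 0) := by
      rw [← map_smul, ← map_sub]
      simp
    rw [hsub, ha, hfst, smul_zero, sub_zero]
  ext <;> simp [hfst, hsnd]

end Module

section L2

variable (b c : ℂ)

theorem L2l_mk_one_self : L2l b c (b, 1) (b, 1) = (b + c, 1) := by
  simp [L2l]

theorem L2r_mk_one_right (x : ℂ × ℂ) : L2r b c x (b, 1) = x.2 • (b, 1) := by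
  simp [L2r, mul_comm]

theorem L2r_mk_one_left (x : ℂ × ℂ) : L2r b c (b, 1) x = x.2 • (b, 1) := by
  simp [L2r, mul_comm]

theorem L2_der_one_one_one_general (hc : c ≠ 0) {ρ τ σ : ℂ} (hρ : ρ ≠ 0)
    (hne : ρ ≠ τ + σ) (d : (ℂ × ℂ) →ₗ[ℂ] (ℂ × ℂ)) :
    IsDer (L2l b c) (L2r b c) ρ τ σ d ↔ d = 0 := by
  refine ⟨fun hd => ?_, fun h => h ▸ isDer_zero⟩
  have hu : d (b, 1) = 0 :=
    hd.map_eq_zero_of_ra_eq_smul hρ hne (φ := LinearMap.snd ℂ ℂ ℂ) rfl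
      (L2r_mk_one_right b c) (L2r_mk_one_left b c)
  have huu : d (b + c, 1) = 0 := L2l_mk_one_self b c ▸ hd.map_la_eq_zero hρ hu hu
  exact linearMap_eq_zero_of_map_mk_one_eq_zero (by simpa using hc) huu hu

end L2

theorem L2_der_one_one_one (b c : ℂ) (hc : c ≠ 0) :
    (∀ d : (ℂ × ℂ) →ₗ[ℂ] (ℂ × ℂ), IsDer (L2l b c) (L2r b c) 1 1 1 d ↔
      d = 0) :=
  L2_der_one_one_one_general b c hc one_ne_zero (by norm_num)
end
end

section
/- Let b, c ∈ ℂ with c ≠ 0, and let L²₂(b,c) be the left-symmetric dialgebra on ℂ² with basis e₁, e₂ and products e₁ ⊣ e₂ = e₁, e₂ ⊣ e₂ = c·e₁ + e₂, e₂ ⊢ e₂ = b·e₁ + e₂ (all other basis products zero). Then a linear map d : ℂ² → ℂ² is a (0,0,1)-derivation of L²₂(b,c) if and only if its matrix in the basis (e₁,e₂) has the form [[d₁₁, d₁₂],[0, 0]] for some d₁₁, d₁₂ ∈ ℂ; in particular Der_{(0,0,1)}L²₂(b,c) has dimension 2. -/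
noncomputable section

/-!
A linear map `d` is a `(0,0,1)`-derivation exactly when `p ⊣ d q = 0` and `p ⊢ d q = 0` for all
`p`, `q`, that is, when `d` takes values in the right annihilator `W` of `S`. Hence
`Der_{(0,0,1)} S ≃ Hom(S, W)` has dimension `dim S * dim W`. For `L²₂(b,c)` the right annihilator is
the line `ℂ e₁`: both products depend on their right factor only through its `e₂`-coordinate, and
that coordinate can be read off from `e₂ ⊢ x`.
-/

theorem mem_range_compRight_subtype_iff {R M N : Type*} [CommSemiring R] [AddCommMonoid M]
    [AddCommMonoid N] [Module R M] [Module R N] {W : Submodule R N} {d : M →ₗ[R] N} :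
    d ∈ (LinearMap.compRight R (M := M) W.subtype).range ↔ d.range ≤ W := by
  constructor
  · rintro ⟨f, rfl⟩ _ ⟨q, rfl⟩
    exact (f q).2
  · intro h
    exact ⟨d.codRestrict W fun q => h (d.mem_range_self q), rfl⟩

theorem range_le_range_inl_iff {R M N : Type*} [Semiring R] [AddCommMonoid M] [AddCommMonoid N]
    [Module R M] [Module R N] {d : R × R →ₗ[R] M × N} :
    d.range ≤ (LinearMap.inl R M N).range ↔
      ∃ x y : M, d (1, 0) = (x, 0) ∧ d (0, 1) = (y, 0) := by
  rw [LinearMap.range_inl, LinearMap.range_le_ker_iff, LinearMap.prod_ext_iff]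
  simp [LinearMap.ext_ring_iff, Prod.ext_iff]

section RightAnnihilator

variable {K S : Type*} [CommRing K] [AddCommGroup S] [Module K S] {la ra : S →ₗ[K] S →ₗ[K] S}

variable (la ra) in
/-- The right annihilator of the algebra `(S, la, ra)`: the elements `x` with `p ⊣ x = 0` and
`p ⊢ x = 0` for all `p`. It is the space in which the `(0,0,1)`-derivations take their values. -/
def rightAnnihilator : Submodule K S :=
  la.flip.ker ⊓ ra.flip.ker

theorem mem_rightAnnihilator {x : S} :
    x ∈ rightAnnihilator la ra ↔ (∀ p, la p x = 0) ∧ ∀ p, ra p x = 0 := by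
  simp [rightAnnihilator, LinearMap.ext_iff]

theorem isDer_zero_zero_one_iff {d : S →ₗ[K] S} :
    IsDer la ra 0 0 1 d ↔ d.range ≤ rightAnnihilator la ra := by
  have range_le_iff : d.range ≤ rightAnnihilator la ra ↔ ∀ q, d q ∈ rightAnnihilator la ra :=
    Set.range_subset_iff
  simp only [range_le_iff, mem_rightAnnihilator, IsDer, zero_smul, one_smul, zero_add,
    eq_comm (a := (0 : S)), forall_and]
  exact and_congr forall_comm forall_comm

variable (la ra) in
theorem derSub_zero_zero_one_eq_range_compRight :
    DerSub la ra 0 0 1 =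
      (LinearMap.compRight K (M := S) (rightAnnihilator la ra).subtype).range :=
  Submodule.ext fun _ => isDer_zero_zero_one_iff.trans mem_range_compRight_subtype_iff.symm

theorem finrank_derSub_zero_zero_one [Nontrivial K] [Module.Free K S] [Module.Finite K S]
    [Module.Free K (rightAnnihilator la ra)] [Module.Finite K (rightAnnihilator la ra)] :
    Module.finrank K (DerSub la ra 0 0 1) =
      Module.finrank K S * Module.finrank K (rightAnnihilator la ra) := by
  have compRight_injective :
      Function.Injective (LinearMap.compRight K (M := S) (rightAnnihilator la ra).subtype) :=
    fun _ _ => (LinearMap.cancel_left (Submodule.subtype_injective _)).1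
  rw [derSub_zero_zero_one_eq_range_compRight, LinearMap.finrank_range_of_inj compRight_injective,
    Module.finrank_linearMap]

end RightAnnihilator

theorem rightAnnihilator_L2 (b c : ℂ) :
    rightAnnihilator (L2l b c) (L2r b c) = (LinearMap.inl ℂ ℂ ℂ).range := by
  ext x
  rw [LinearMap.range_inl, LinearMap.mem_ker, LinearMap.snd_apply, mem_rightAnnihilator]
  constructor
  · rintro ⟨-, h⟩
    simpa [L2r] using congrArg Prod.snd (h (0, 1))
  · intro h
    simp [L2l, L2r, h]

theorem finrank_rightAnnihilator_L2 (b c : ℂ) :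
    Module.finrank ℂ (rightAnnihilator (L2l b c) (L2r b c)) = 1 := by
  rw [rightAnnihilator_L2, LinearMap.finrank_range_of_inj LinearMap.inl_injective,
    Module.finrank_self]

theorem L2_der_zero_zero_one (b c : ℂ) (hc : c ≠ 0) :
    (∀ d : (ℂ × ℂ) →ₗ[ℂ] (ℂ × ℂ), IsDer (L2l b c) (L2r b c) 0 0 1 d ↔
      ∃ d₁₁ d₁₂ : ℂ, d ((1 : ℂ), (0 : ℂ)) = (d₁₁, 0) ∧ d ((0 : ℂ), (1 : ℂ)) = (d₁₂, 0)) ∧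
    Module.finrank ℂ (DerSub (L2l b c) (L2r b c) 0 0 1) = 2 := by
  constructor
  · intro d
    rw [isDer_zero_zero_one_iff, rightAnnihilator_L2, range_le_range_inl_iff]
  · rw [finrank_derSub_zero_zero_one, finrank_rightAnnihilator_L2, Module.finrank_prod,
      Module.finrank_self]
end
end

section
/- Let b ∈ ℂ and let L³₂(b) be the left-symmetric dialgebra on ℂ² with basis e₁, e₂ and products e₁ ⊣ e₂ = e₁, e₂ ⊣ e₂ = e₂, e₂ ⊢ e₂ = b·e₁ + e₂ (all other basis products zero). Then a linear map d : ℂ² → ℂ² is a (1,1,1)-derivation of L³₂(b) if and only if its matrix in the basis (e₁,e₂) has the form [[t, −b·t],[0, 0]] for some t ∈ ℂ; in particular Der_{(1,1,1)}L³₂(b) has dimension 1. -/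
noncomputable section

/-- The left product `⊣` of the dialgebra, extended bilinearly from its values on the
basis `e₁ = (1,0)`, `e₂ = (0,1)` of `ℂ²`. -/
def L3l (b : ℂ) : (ℂ × ℂ) →ₗ[ℂ] (ℂ × ℂ) →ₗ[ℂ] (ℂ × ℂ) :=
  LinearMap.mk₂ ℂ (fun p q => (p.1 * q.2, p.2 * q.2))
    (by intros; ext <;> simp <;> ring)
    (by intros; ext <;> simp <;> ring)
    (by intros; ext <;> simp <;> ring)
    (by intros; ext <;> simp <;> ring)

/-- The right product `⊢` of the dialgebra, extended bilinearly from its values on the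
basis `e₁ = (1,0)`, `e₂ = (0,1)` of `ℂ²`. -/
def L3r (b : ℂ) : (ℂ × ℂ) →ₗ[ℂ] (ℂ × ℂ) →ₗ[ℂ] (ℂ × ℂ) :=
  LinearMap.mk₂ ℂ (fun p q => (b * p.2 * q.2, p.2 * q.2))
    (by intros; ext <;> simp <;> ring)
    (by intros; ext <;> simp <;> ring)
    (by intros; ext <;> simp <;> ring)
    (by intros; ext <;> simp <;> ring)

/-!
Write `f` for the second coordinate and `u = (b, 1)`, so that `f u = 1`. The products are
`p ⊣ q = f q • p` and `p ⊢ q = f p • f q • u`. Compatibility of `d` with `⊣` reads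
`f (d q) • p = 0` for all `p, q`, that is, `f ∘ d = 0`; compatibility with `⊢` then reduces to
`d u = 0`. Since the module is the direct sum of `ker f` and the line through `u`, the maps with
these two properties are exactly the endomorphisms of `ker f` extended by zero on `u`, and here
`ker f` is a line.
-/

section FunctionalProducts

variable {K S : Type*} [CommRing K] [AddCommGroup S] [Module K S]

/-- The bilinear product `p ⊣ q = f q • p` attached to a linear functional `f`; it abstracts the
left product of `L³₂(b)`. -/
def functionalLeftProd (f : S →ₗ[K] K) : S →ₗ[K] S →ₗ[K] S :=
  (f.smulRight (LinearMap.id : S →ₗ[K] S)).flip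

/-- The bilinear product `p ⊢ q = f p • f q • u` attached to a linear functional `f` and a vector
`u`; it abstracts the right product of `L³₂(b)`. -/
def functionalRightProd (f : S →ₗ[K] K) (u : S) : S →ₗ[K] S →ₗ[K] S :=
  f.smulRight (f.smulRight u)

@[simp]
theorem functionalLeftProd_apply (f : S →ₗ[K] K) (p q : S) :
    functionalLeftProd f p q = f q • p :=
  rfl

@[simp]
theorem functionalRightProd_apply (f : S →ₗ[K] K) (u p q : S) :
    functionalRightProd f u p q = f p • f q • u :=
  rfl

variable {f : S →ₗ[K] K} {u : S}

theorem isDer_functionalProds_iff (hu : f u = 1) (d : S →ₗ[K] S) :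
    IsDer (functionalLeftProd f) (functionalRightProd f u) 1 1 1 d ↔
      (∀ q, f (d q) = 0) ∧ d u = 0 := by
  simp only [IsDer, functionalLeftProd_apply, functionalRightProd_apply, one_smul, map_smul]
  constructor
  · rintro ⟨hleft, hright⟩
    have hfd (q : S) : f (d q) = 0 := by
      have hsmul : f (d q) • u = 0 := left_eq_add.mp (hleft u q)
      simpa [hu] using congrArg f hsmul
    exact ⟨hfd, by simpa [hu, hfd] using hright u u⟩
  · rintro ⟨hfd, hdu⟩
    simp [hfd, hdu]

/-- The projection `x ↦ x - f x • u` onto `ker f` along a vector `u` with `f u = 1`. -/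
def kerProjAlong (hu : f u = 1) : S →ₗ[K] LinearMap.ker f :=
  (LinearMap.id - f.smulRight u).codRestrict (LinearMap.ker f) fun x => by simp [hu]

@[simp]
theorem coe_kerProjAlong (hu : f u = 1) (x : S) : (kerProjAlong hu x : S) = x - f x • u :=
  rfl

theorem kerProjAlong_coe (hu : f u = 1) (x : LinearMap.ker f) : kerProjAlong hu x = x := by
  ext
  simp

theorem kerProjAlong_self (hu : f u = 1) : kerProjAlong hu u = 0 := by
  ext
  simp [hu]

/-- Restriction to `ker f` identifies the `(1,1,1)`-derivations of the products attached to `f` and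
`u` with the endomorphisms of `ker f`; the inverse extends an endomorphism by zero on `u`. -/
def derSubEquivEndKer (hu : f u = 1) :
    DerSub (functionalLeftProd f) (functionalRightProd f u) 1 1 1 ≃ₗ[K]
      Module.End K (LinearMap.ker f) where
  toFun d := d.1.restrict fun x _ =>
    LinearMap.mem_ker.2 (((isDer_functionalProds_iff hu d.1).1 d.2).1 x)
  map_add' _ _ := rfl
  map_smul' _ _ := rfl
  invFun g := ⟨(LinearMap.ker f).subtype ∘ₗ g ∘ₗ kerProjAlong hu,
    (isDer_functionalProds_iff hu _).2
      ⟨fun q => (g (kerProjAlong hu q)).2, by simp [kerProjAlong_self hu]⟩⟩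
  left_inv d := by
    have hdu : d.1 u = 0 := ((isDer_functionalProds_iff hu d.1).1 d.2).2
    ext x
    simp [hdu]
  right_inv g := by
    ext x
    simp [kerProjAlong_coe hu]

end FunctionalProducts

section Plane

variable {K : Type*} [CommRing K]

theorem snd_map_eq_zero_and_map_eq_zero_iff (b : K) (d : K × K →ₗ[K] K × K) :
    ((∀ q, (d q).2 = 0) ∧ d (b, 1) = 0) ↔
      ∃ t : K, d (1, 0) = (t, 0) ∧ d (0, 1) = (-b * t, 0) := by
  have map_mk (x y : K) : d (x, y) = x • d (1, 0) + y • d (0, 1) := by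
    rw [← map_smul, ← map_smul, ← map_add]
    simp
  constructor
  · rintro ⟨hsnd, hker⟩
    have hfst : b * (d (1, 0)).1 + (d (0, 1)).1 = 0 := by
      simpa [map_mk b 1] using congrArg Prod.fst hker
    refine ⟨(d (1, 0)).1, Prod.ext rfl (hsnd _), Prod.ext ?_ (hsnd _)⟩
    linear_combination hfst
  · rintro ⟨t, he₁, he₂⟩
    refine ⟨fun ⟨x, y⟩ => ?_, ?_⟩
    · simp [map_mk x y, he₁, he₂]
    · simp [map_mk b 1, he₁, he₂]

/-- The first coordinate axis of `K × K`, as the kernel of the second coordinate. -/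
def equivKerSnd : K ≃ₗ[K] LinearMap.ker (LinearMap.snd K K K) :=
  (LinearEquiv.ofInjective (LinearMap.inl K K K) LinearMap.inl_injective).trans
    (LinearEquiv.ofEq _ _ (LinearMap.range_inl K K K))

theorem L3_der_one_one_one_general [Nontrivial K] (b : K) :
    (∀ d : K × K →ₗ[K] K × K,
      IsDer (functionalLeftProd (LinearMap.snd K K K))
          (functionalRightProd (LinearMap.snd K K K) (b, 1)) 1 1 1 d ↔
        ∃ t : K, d (1, 0) = (t, 0) ∧ d (0, 1) = (-b * t, 0)) ∧
    Module.finrank K (DerSub (functionalLeftProd (LinearMap.snd K K K))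
      (functionalRightProd (LinearMap.snd K K K) (b, 1)) 1 1 1) = 1 := by
  have hu : LinearMap.snd K K K (b, 1) = 1 := rfl
  refine ⟨fun d => (isDer_functionalProds_iff hu d).trans
    (snd_map_eq_zero_and_map_eq_zero_iff b d), ?_⟩
  have derSubEquiv := (derSubEquivEndKer hu).trans
    (equivKerSnd.symm.conj.trans (LinearMap.ringLmapEquivSelf K K K))
  rw [derSubEquiv.finrank_eq, Module.finrank_self]

end Plane

theorem L3l_eq_functionalLeftProd (b : ℂ) :
    L3l b = functionalLeftProd (LinearMap.snd ℂ ℂ ℂ) := by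
  ext <;> simp [L3l]

theorem L3r_eq_functionalRightProd (b : ℂ) :
    L3r b = functionalRightProd (LinearMap.snd ℂ ℂ ℂ) (b, 1) := by
  ext <;> simp [L3r]

theorem L3_der_one_one_one (b : ℂ) :
    (∀ d : (ℂ × ℂ) →ₗ[ℂ] (ℂ × ℂ), IsDer (L3l b) (L3r b) 1 1 1 d ↔
      ∃ t : ℂ, d ((1 : ℂ), (0 : ℂ)) = (t, 0) ∧ d ((0 : ℂ), (1 : ℂ)) = (-b * t, 0)) ∧
    Module.finrank ℂ (DerSub (L3l b) (L3r b) 1 1 1) = 1 := by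
  rw [L3l_eq_functionalLeftProd, L3r_eq_functionalRightProd]
  exact L3_der_one_one_one_general b
end
end

section
/- Let b ∈ ℂ and let L³₂(b) be the left-symmetric dialgebra on ℂ² with basis e₁, e₂ and products e₁ ⊣ e₂ = e₁, e₂ ⊣ e₂ = e₂, e₂ ⊢ e₂ = b·e₁ + e₂ (all other basis products zero). Then a linear map d : ℂ² → ℂ² is a (1,1,0)-derivation of L³₂(b) if and only if its matrix in the basis (e₁,e₂) has the form [[d₁₁, −b·d₁₁ + b·d₂₂],[0, d₂₂]] for some d₁₁, d₂₂ ∈ ℂ; in particular Der_{(1,1,0)}L³₂(b) has dimension 2. -/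
noncomputable section

/-!
A `(1,1,0)`-derivation is a linear map commuting with all right multiplications of both products.
In `L³₂(b)` right `⊣`-multiplication by `q` is the scalar `q₂`, which commutes with everything,
and right `⊢`-multiplication by `q` is `q₂ π`, where `π p = p₂ (b, 1)` is the projection onto the
line of `(b, 1)` along `e₁`. So the `(1,1,0)`-derivations are the commutant of `π`: the maps that
are diagonal in the basis `e₁, (b, 1)`, or equivalently the combinations of `1` and `π`.
-/

section General

variable {K S : Type*} [CommRing K] [AddCommGroup S] [Module K S]

theorem isDer_one_one_zero_iff_commute_flip (la ra : S →ₗ[K] S →ₗ[K] S) (d : Module.End K S) :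
    IsDer la ra 1 1 0 d ↔ (∀ q, Commute d (la.flip q)) ∧ ∀ q, Commute d (ra.flip q) := by
  have commute_flip_iff (m : S →ₗ[K] S →ₗ[K] S) :
      (∀ p q, (1 : K) • d (m p q) = (1 : K) • m (d p) q + (0 : K) • m p (d q)) ↔
        ∀ q, Commute d (m.flip q) := by
    simp only [one_smul, zero_smul, add_zero, commute_iff_eq, LinearMap.ext_iff,
      Module.End.mul_apply, LinearMap.flip_apply]
    exact forall_comm
  exact and_congr (commute_flip_iff la) (commute_flip_iff ra)

theorem commute_smulRight_iff_of_apply_eq_one {f : S →ₗ[K] K} {v : S} (hfv : f v = 1)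
    (d : Module.End K S) :
    Commute d (f.smulRight v) ↔ ∃ c : K, d v = c • v ∧ f ∘ₗ d = c • f := by
  simp only [commute_iff_eq, LinearMap.ext_iff, Module.End.mul_apply, LinearMap.smulRight_apply,
    map_smul, LinearMap.comp_apply, LinearMap.smul_apply, smul_eq_mul]
  constructor
  · intro h
    have eigenvector : d v = f (d v) • v := by simpa only [hfv, one_smul] using h v
    refine ⟨f (d v), eigenvector, fun p => ?_⟩
    calc f (d p) = f (f (d p) • v) := by rw [map_smul, hfv, smul_eq_mul, mul_one]
      _ = f (f p • d v) := by rw [h p]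
      _ = f (d v) * f p := by rw [map_smul, smul_eq_mul, mul_comm]
  · rintro ⟨c, hv, hf⟩ p
    rw [hv, hf, smul_smul, mul_comm]

end General

/-- The projection `p ↦ p₂ (b, 1)` of `ℂ²` onto the line of `(b, 1)` along `e₁`; it is right
multiplication by `e₂` for the product `⊢` of `L³₂(b)`. -/
def L3Proj (b : ℂ) : Module.End ℂ (ℂ × ℂ) :=
  (LinearMap.snd ℂ ℂ ℂ).smulRight (b, 1)

theorem L3Proj_apply (b : ℂ) (p : ℂ × ℂ) : L3Proj b p = (p.2 * b, p.2) := by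
  simp [L3Proj]

theorem L3l_flip_eq_smul_one (b : ℂ) (q : ℂ × ℂ) :
    (L3l b).flip q = q.2 • (1 : Module.End ℂ (ℂ × ℂ)) := by
  ext <;> simp [L3l]

theorem L3r_flip_eq_smul_L3Proj (b : ℂ) (q : ℂ × ℂ) : (L3r b).flip q = q.2 • L3Proj b := by
  ext <;> simp [L3r, L3Proj_apply, mul_comm]

theorem isDer_L3_iff_commute_L3Proj (b : ℂ) (d : Module.End ℂ (ℂ × ℂ)) :
    IsDer (L3l b) (L3r b) 1 1 0 d ↔ Commute d (L3Proj b) := by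
  simp only [isDer_one_one_zero_iff_commute_flip, L3l_flip_eq_smul_one, L3r_flip_eq_smul_L3Proj]
  constructor
  · rintro ⟨-, h⟩
    simpa only [one_smul] using h (0, 1)
  · exact fun h => ⟨fun q => (Commute.one_right d).smul_right q.2, fun q => h.smul_right q.2⟩

theorem commute_L3Proj_iff_exists_apply_basis (b : ℂ) (d : Module.End ℂ (ℂ × ℂ)) :
    Commute d (L3Proj b) ↔
      ∃ d₁₁ d₂₂ : ℂ, d (1, 0) = (d₁₁, 0) ∧ d (0, 1) = (-b * d₁₁ + b * d₂₂, d₂₂) := by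
  have apply_b_one : d (b, 1) = b • d (1, 0) + d (0, 1) := by
    rw [← map_smul, ← map_add]
    simp
  rw [L3Proj, commute_smulRight_iff_of_apply_eq_one (LinearMap.snd_apply _)]
  constructor
  · rintro ⟨c, eigenvector, eigenfunctional⟩
    have snd_apply (p : ℂ × ℂ) : (d p).2 = c * p.2 := LinearMap.congr_fun eigenfunctional p
    have fst_apply : b * (d (1, 0)).1 + (d (0, 1)).1 = c * b :=
      congrArg Prod.fst (apply_b_one.symm.trans eigenvector)
    refine ⟨(d (1, 0)).1, c, Prod.ext rfl ?_, Prod.ext ?_ ?_⟩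
    · simp [snd_apply]
    · linear_combination fst_apply
    · simp [snd_apply]
  · rintro ⟨d₁₁, d₂₂, h₁, h₂⟩
    refine ⟨d₂₂, ?_, ?_⟩
    · rw [apply_b_one, h₁, h₂]
      ext <;> simp [mul_comm]
    · ext <;> simp [h₁, h₂]

theorem exists_apply_basis_iff_mem_span (b : ℂ) (d : Module.End ℂ (ℂ × ℂ)) :
    (∃ d₁₁ d₂₂ : ℂ, d (1, 0) = (d₁₁, 0) ∧ d (0, 1) = (-b * d₁₁ + b * d₂₂, d₂₂)) ↔
      d ∈ Submodule.span ℂ {1, L3Proj b} := by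
  rw [Submodule.mem_span_pair]
  constructor
  · rintro ⟨d₁₁, d₂₂, h₁, h₂⟩
    refine ⟨d₁₁, d₂₂ - d₁₁, ?_⟩
    ext <;> simp [h₁, h₂, L3Proj_apply, sub_mul, mul_comm b, neg_add_eq_sub]
  · rintro ⟨x, y, rfl⟩
    refine ⟨x, x + y, ?_, ?_⟩ <;> ext <;> simp [L3Proj_apply, add_mul, mul_comm b]

theorem isDer_L3_iff_exists_apply_basis (b : ℂ) (d : Module.End ℂ (ℂ × ℂ)) :
    IsDer (L3l b) (L3r b) 1 1 0 d ↔
      ∃ d₁₁ d₂₂ : ℂ, d (1, 0) = (d₁₁, 0) ∧ d (0, 1) = (-b * d₁₁ + b * d₂₂, d₂₂) :=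
  (isDer_L3_iff_commute_L3Proj b d).trans (commute_L3Proj_iff_exists_apply_basis b d)

theorem derSub_L3_eq_span (b : ℂ) :
    DerSub (L3l b) (L3r b) 1 1 0 = Submodule.span ℂ {1, L3Proj b} :=
  Submodule.ext fun d =>
    (isDer_L3_iff_exists_apply_basis b d).trans (exists_apply_basis_iff_mem_span b d)

theorem linearIndependent_one_L3Proj (b : ℂ) :
    LinearIndependent ℂ ![(1 : Module.End ℂ (ℂ × ℂ)), L3Proj b] := by
  rw [LinearIndependent.pair_iff]
  intro x y h
  have hx : x = 0 := by
    simpa [L3Proj_apply] using congrArg Prod.fst (LinearMap.congr_fun h (1, 0))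
  have hxy : x + y = 0 := by
    simpa [L3Proj_apply] using congrArg Prod.snd (LinearMap.congr_fun h (0, 1))
  exact ⟨hx, by simpa only [hx, zero_add] using hxy⟩

theorem finrank_span_one_L3Proj (b : ℂ) :
    Module.finrank ℂ (Submodule.span ℂ {1, L3Proj b}) = 2 := by
  rw [← Matrix.range_cons_cons_empty _ _ ![], finrank_span_eq_card (linearIndependent_one_L3Proj b),
    Fintype.card_fin]

theorem L3_der_one_one_zero (b : ℂ) :
    (∀ d : (ℂ × ℂ) →ₗ[ℂ] (ℂ × ℂ), IsDer (L3l b) (L3r b) 1 1 0 d ↔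
      ∃ d₁₁ d₂₂ : ℂ, d ((1 : ℂ), (0 : ℂ)) = (d₁₁, 0) ∧ d ((0 : ℂ), (1 : ℂ)) = (-b * d₁₁ + b * d₂₂, d₂₂)) ∧
    Module.finrank ℂ (DerSub (L3l b) (L3r b) 1 1 0) = 2 := by
  refine ⟨isDer_L3_iff_exists_apply_basis b, ?_⟩
  rw [derSub_L3_eq_span, finrank_span_one_L3Proj]
end
end

section
/- Let c ∈ ℂ and let L⁴₂(c) be the left-symmetric dialgebra on ℂ² with basis e₁, e₂ and products e₂ ⊣ e₂ = c·e₁ + e₂, e₂ ⊢ e₁ = e₁, e₂ ⊢ e₂ = e₂ (all other basis products zero). Then a linear map d : ℂ² → ℂ² is a (1,0,1)-derivation of L⁴₂(c) if and only if its matrix in the basis (e₁,e₂) has the form [[d₁₁, −c·d₁₁ + c·d₂₂],[0, d₂₂]] for some d₁₁, d₂₂ ∈ ℂ; in particular Der_{(1,0,1)}L⁴₂(c) has dimension 2. -/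
noncomputable section

/-- The left product `⊣` of the dialgebra, extended bilinearly from its values on the
basis `e₁ = (1,0)`, `e₂ = (0,1)` of `ℂ²`. -/
def L4l (c : ℂ) : (ℂ × ℂ) →ₗ[ℂ] (ℂ × ℂ) →ₗ[ℂ] (ℂ × ℂ) :=
  LinearMap.mk₂ ℂ (fun p q => (c * p.2 * q.2, p.2 * q.2))
    (by intros; ext <;> simp <;> ring)
    (by intros; ext <;> simp <;> ring)
    (by intros; ext <;> simp <;> ring)
    (by intros; ext <;> simp <;> ring)

/-- The right product `⊢` of the dialgebra, extended bilinearly from its values on the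
basis `e₁ = (1,0)`, `e₂ = (0,1)` of `ℂ²`. -/
def L4r (c : ℂ) : (ℂ × ℂ) →ₗ[ℂ] (ℂ × ℂ) →ₗ[ℂ] (ℂ × ℂ) :=
  LinearMap.mk₂ ℂ (fun p q => (p.2 * q.1, p.2 * q.2))
    (by intros; ext <;> simp <;> ring)
    (by intros; ext <;> simp <;> ring)
    (by intros; ext <;> simp <;> ring)
    (by intros; ext <;> simp <;> ring)

/-!
A `(1,0,1)`-derivation is an endomorphism commuting with every left multiplication of both products.
In `L⁴₂(c)` the left multiplications are the multiples of the identity and of `q ↦ e₂ ⊣ q`, and the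
latter is diagonal with the distinct eigenvalues `0, 1` in the basis `e₁, c e₁ + e₂`. Its commutant
therefore consists of the endomorphisms that are diagonal in that basis.
-/

theorem isDer_one_zero_one_iff_commute {K S : Type*} [CommRing K] [AddCommGroup S] [Module K S]
    {la ra : S →ₗ[K] S →ₗ[K] S} {d : Module.End K S} :
    IsDer la ra 1 0 1 d ↔ (∀ p, Commute d (la p)) ∧ ∀ p, Commute d (ra p) := by
  simp only [IsDer, one_smul, zero_smul, zero_add, commute_iff_eq, LinearMap.ext_iff,
    Module.End.mul_apply]

section Diagonal

variable {ι K M : Type*} [CommRing K] [AddCommGroup M] [Module K M] (b : Module.Basis ι K M)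

/-- The endomorphism of `M` that scales each basis vector `b i` by `x i`, as a linear function of
the family of eigenvalues `x`. Its range is the space of endomorphisms diagonal in the basis `b`. -/
def diagonalEnd : (ι → K) →ₗ[K] Module.End K M where
  toFun x := b.constr K fun i => x i • b i
  map_add' x y := b.ext fun i => by simp [add_smul]
  map_smul' a x := b.ext fun i => by simp [mul_smul]

theorem diagonalEnd_apply_basis (x : ι → K) (i : ι) : diagonalEnd b x (b i) = x i • b i :=
  b.constr_basis K _ i

theorem repr_diagonalEnd_apply (x : ι → K) (v : M) (i : ι) :
    b.repr (diagonalEnd b x v) i = x i * b.repr v i := by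
  have coord_comp : b.coord i ∘ₗ diagonalEnd b x = x i • b.coord i := b.ext fun j => by
    obtain rfl | hij := eq_or_ne j i
    · simp [diagonalEnd_apply_basis]
    · simp [diagonalEnd_apply_basis, Finsupp.single_eq_of_ne' hij]
  exact LinearMap.congr_fun coord_comp v

theorem diagonalEnd_injective : Function.Injective (diagonalEnd b) := fun x y hxy => by
  ext i
  have hi := congrArg (fun d : Module.End K M => b.repr (d (b i)) i) hxy
  simpa [diagonalEnd_apply_basis] using hi

theorem finrank_range_diagonalEnd [Fintype ι] [StrongRankCondition K] :
    Module.finrank K (LinearMap.range (diagonalEnd b)) = Fintype.card ι := by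
  rw [LinearMap.finrank_range_of_inj (diagonalEnd_injective b), Module.finrank_fintype_fun_eq_card]

theorem commute_diagonalEnd (x y : ι → K) : Commute (diagonalEnd b x) (diagonalEnd b y) :=
  b.ext fun i => by simp [diagonalEnd_apply_basis, smul_smul, mul_comm]

theorem mem_range_diagonalEnd_iff {d : Module.End K M} :
    d ∈ LinearMap.range (diagonalEnd b) ↔ ∃ x : ι → K, ∀ i, d (b i) = x i • b i := by
  refine exists_congr fun x => ⟨?_, fun h => b.ext fun i => ?_⟩
  · rintro rfl i
    exact diagonalEnd_apply_basis b x i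
  · rw [diagonalEnd_apply_basis, h i]

theorem commute_diagonalEnd_iff_mem_range [NoZeroDivisors K] {x : ι → K}
    (hx : Function.Injective x) {d : Module.End K M} :
    Commute d (diagonalEnd b x) ↔ d ∈ LinearMap.range (diagonalEnd b) := by
  refine ⟨fun hd => ?_, ?_⟩
  · refine (mem_range_diagonalEnd_iff b).2 ⟨fun i => b.repr (d (b i)) i, fun i => ?_⟩
    have eigenvector : diagonalEnd b x (d (b i)) = x i • d (b i) := by
      rw [← Module.End.mul_apply, ← hd.eq, Module.End.mul_apply, diagonalEnd_apply_basis, map_smul]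
    have off_diagonal_eq_zero (j : ι) (hij : i ≠ j) : b.repr (d (b i)) j = 0 := by
      have coord_eq : x j * b.repr (d (b i)) j = x i * b.repr (d (b i)) j := by
        rw [← repr_diagonalEnd_apply, eigenvector, map_smul, Finsupp.smul_apply, smul_eq_mul]
      exact (mul_eq_mul_right_iff.1 coord_eq).resolve_left (hx.ne hij.symm)
    refine b.ext_elem fun j => ?_
    obtain rfl | hij := eq_or_ne i j
    · simp
    · simp [off_diagonal_eq_zero j hij, Finsupp.single_eq_of_ne' hij]
  · rintro ⟨y, rfl⟩
    exact commute_diagonalEnd b y x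

end Diagonal

theorem L4l_eq_smul_L4l_e₂ (c : ℂ) (p : ℂ × ℂ) : L4l c p = p.2 • L4l c (0, 1) := by
  ext <;> simp [L4l, mul_comm]

theorem L4r_eq_smul_one (c : ℂ) (p : ℂ × ℂ) : L4r c p = p.2 • (1 : Module.End ℂ (ℂ × ℂ)) := by
  ext <;> simp [L4r]

theorem isDer_L4_iff_commute_L4l_e₂ {c : ℂ} {d : Module.End ℂ (ℂ × ℂ)} :
    IsDer (L4l c) (L4r c) 1 0 1 d ↔ Commute d (L4l c (0, 1)) := by
  rw [isDer_one_zero_one_iff_commute]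
  refine ⟨fun h => h.1 (0, 1), fun h => ⟨fun p => ?_, fun p => ?_⟩⟩
  · rw [L4l_eq_smul_L4l_e₂]
    exact h.smul_right p.2
  · rw [L4r_eq_smul_one]
    exact (Commute.one_right d).smul_right p.2

/-- The basis `e₁, c e₁ + e₂` of `ℂ²`, consisting of eigenvectors of `q ↦ e₂ ⊣ q`; it is given by
its coordinate functions. -/
def L4eigenbasis (c : ℂ) : Module.Basis (Fin 2) ℂ (ℂ × ℂ) :=
  .ofEquivFun
    { toFun := fun q => ![q.1 - c * q.2, q.2]
      invFun := fun x => (x 0 + c * x 1, x 1)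
      map_add' := fun p q => by ext i; fin_cases i <;> simp; ring
      map_smul' := fun k q => by ext i; fin_cases i <;> simp; ring
      left_inv := fun q => by simp
      right_inv := fun x => by ext i; fin_cases i <;> simp }

theorem L4eigenbasis_zero (c : ℂ) : L4eigenbasis c 0 = (1, 0) := by
  simp [L4eigenbasis]

theorem L4eigenbasis_one (c : ℂ) : L4eigenbasis c 1 = (c, 1) := by
  simp [L4eigenbasis]

theorem L4l_e₂_eq_diagonalEnd (c : ℂ) : L4l c (0, 1) = diagonalEnd (L4eigenbasis c) ![0, 1] := by
  refine (L4eigenbasis c).ext fun i => ?_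
  rw [diagonalEnd_apply_basis]
  fin_cases i <;> simp [L4eigenbasis_zero, L4eigenbasis_one, L4l]

theorem derSub_L4_eq_range_diagonalEnd (c : ℂ) :
    DerSub (L4l c) (L4r c) 1 0 1 = LinearMap.range (diagonalEnd (L4eigenbasis c)) := by
  have eigenvalues_injective : Function.Injective ![(0 : ℂ), 1] := by simp
  ext d
  change IsDer (L4l c) (L4r c) 1 0 1 d ↔ _
  rw [isDer_L4_iff_commute_L4l_e₂, L4l_e₂_eq_diagonalEnd,
    commute_diagonalEnd_iff_mem_range _ eigenvalues_injective]

theorem mem_range_diagonalEnd_L4eigenbasis_iff {c : ℂ} {d : Module.End ℂ (ℂ × ℂ)} :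
    d ∈ LinearMap.range (diagonalEnd (L4eigenbasis c)) ↔
      ∃ d₁₁ d₂₂ : ℂ, d (1, 0) = (d₁₁, 0) ∧ d (0, 1) = (-c * d₁₁ + c * d₂₂, d₂₂) := by
  have map_eigenvector : d (c, 1) = c • d (1, 0) + d (0, 1) := by
    rw [← map_smul, ← map_add]
    simp
  rw [mem_range_diagonalEnd_iff, (finTwoArrowEquiv ℂ).exists_congr_left, Prod.exists]
  simp only [Fin.forall_fin_two, L4eigenbasis_zero, L4eigenbasis_one, map_eigenvector,
    finTwoArrowEquiv_symm_apply, Matrix.cons_val_zero, Matrix.cons_val_one, Prod.smul_mk,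
    smul_eq_mul, mul_one, mul_zero]
  refine exists_congr fun d₁₁ => exists_congr fun d₂₂ => and_congr_right fun map_e₁ => ?_
  have second_column : (d₂₂ * c, d₂₂) - c • (d₁₁, (0 : ℂ)) = (-c * d₁₁ + c * d₂₂, d₂₂) := by
    ext <;> simp
    ring
  rw [map_e₁, ← eq_sub_iff_add_eq', second_column]

theorem L4_der_one_zero_one (c : ℂ) :
    (∀ d : (ℂ × ℂ) →ₗ[ℂ] (ℂ × ℂ), IsDer (L4l c) (L4r c) 1 0 1 d ↔
      ∃ d₁₁ d₂₂ : ℂ, d ((1 : ℂ), (0 : ℂ)) = (d₁₁, 0) ∧ d ((0 : ℂ), (1 : ℂ)) = (-c * d₁₁ + c * d₂₂, d₂₂)) ∧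
    Module.finrank ℂ (DerSub (L4l c) (L4r c) 1 0 1) = 2 := by
  refine ⟨fun d => ?_, ?_⟩
  · change d ∈ DerSub (L4l c) (L4r c) 1 0 1 ↔ _
    rw [derSub_L4_eq_range_diagonalEnd, mem_range_diagonalEnd_L4eigenbasis_iff]
  · rw [derSub_L4_eq_range_diagonalEnd, finrank_range_diagonalEnd, Fintype.card_fin]
end
end

section
/- Let c ∈ ℂ and let L⁴₂(c) be the left-symmetric dialgebra on ℂ² with basis e₁, e₂ and products e₂ ⊣ e₂ = c·e₁ + e₂, e₂ ⊢ e₁ = e₁, e₂ ⊢ e₂ = e₂ (all other basis products zero). Then a linear map d : ℂ² → ℂ² is a (0,1,0)-derivation of L⁴₂(c) if and only if its matrix in the basis (e₁,e₂) has the form [[d₁₁, d₁₂],[0, 0]] for some d₁₁, d₁₂ ∈ ℂ; in particular Der_{(0,1,0)}L⁴₂(c) has dimension 2. -/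
noncomputable section

section LeftAnnihilator

variable {K S : Type*}

/-- The left annihilator `{p | p ⊣ q = 0 = p ⊢ q for all q}` of the algebra `(S, la, ra)`, in which
the `(0,1,0)`-derivations take their values. Since `la` and `ra` are curried in their left argument,
it is the intersection of their kernels. -/
def leftAnnihilator [CommRing K] [AddCommGroup S] [Module K S]
    (la ra : S →ₗ[K] S →ₗ[K] S) : Submodule K S :=
  LinearMap.ker la ⊓ LinearMap.ker ra

theorem isDer_zero_one_zero_iff_forall_mem_leftAnnihilator [CommRing K] [AddCommGroup S]
    [Module K S] {la ra : S →ₗ[K] S →ₗ[K] S} {d : S →ₗ[K] S} :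
    IsDer la ra 0 1 0 d ↔ ∀ p, d p ∈ leftAnnihilator la ra := by
  simp [IsDer, leftAnnihilator, LinearMap.ext_iff, forall_and, eq_comm]

/-- The `(0,1,0)`-derivations of `(S, la, ra)`, identified with the linear maps from `S` to its
left annihilator by restricting the codomain. -/
def derSubZeroOneZeroEquiv [CommRing K] [AddCommGroup S] [Module K S]
    (la ra : S →ₗ[K] S →ₗ[K] S) :
    DerSub la ra 0 1 0 ≃ₗ[K] (S →ₗ[K] leftAnnihilator la ra) where
  toFun d := d.1.codRestrict _ (isDer_zero_one_zero_iff_forall_mem_leftAnnihilator.1 d.2)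
  invFun f := ⟨(leftAnnihilator la ra).subtype ∘ₗ f,
    isDer_zero_one_zero_iff_forall_mem_leftAnnihilator.2 fun p => (f p).2⟩
  map_add' _ _ := rfl
  map_smul' _ _ := rfl
  left_inv _ := rfl
  right_inv _ := rfl

theorem finrank_derSub_zero_one_zero [Field K] [AddCommGroup S] [Module K S]
    [FiniteDimensional K S] (la ra : S →ₗ[K] S →ₗ[K] S) :
    Module.finrank K (DerSub la ra 0 1 0) =
      Module.finrank K S * Module.finrank K (leftAnnihilator la ra) := by
  rw [(derSubZeroOneZeroEquiv la ra).finrank_eq, Module.finrank_linearMap]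

end LeftAnnihilator

theorem forall_apply_mem_ker_snd_iff {R M N : Type*} [Semiring R] [AddCommMonoid M]
    [Module R M] [AddCommMonoid N] [Module R N] {d : R × R →ₗ[R] M × N} :
    (∀ p, d p ∈ LinearMap.ker (LinearMap.snd R M N)) ↔
      ∃ m₁ m₂ : M, d (1, 0) = (m₁, 0) ∧ d (0, 1) = (m₂, 0) := by
  calc (∀ p, d p ∈ LinearMap.ker (LinearMap.snd R M N))
    _ ↔ LinearMap.snd R M N ∘ₗ d = 0 := by simp [LinearMap.ext_iff]
    _ ↔ (d (1, 0)).2 = 0 ∧ (d (0, 1)).2 = 0 := by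
      simp [LinearMap.prod_ext_iff, LinearMap.ext_ring_iff]
    _ ↔ _ := by simp [Prod.ext_iff]

theorem finrank_ker_snd (R M N : Type*) [Semiring R] [AddCommMonoid M] [Module R M]
    [AddCommMonoid N] [Module R N] :
    Module.finrank R (LinearMap.ker (LinearMap.snd R M N)) = Module.finrank R M := by
  rw [LinearMap.ker_snd, LinearMap.finrank_range_of_inj LinearMap.inl_injective]

theorem ker_L4l (c : ℂ) : LinearMap.ker (L4l c) = LinearMap.ker (LinearMap.snd ℂ ℂ ℂ) := by
  ext p
  refine ⟨fun hp => ?_, fun hp => ?_⟩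
  · simpa [L4l] using congrArg Prod.snd (LinearMap.congr_fun hp (0, 1))
  · have hp₂ : p.2 = 0 := hp
    exact LinearMap.ext fun q => by simp [L4l, hp₂]

theorem ker_L4r (c : ℂ) : LinearMap.ker (L4r c) = LinearMap.ker (LinearMap.snd ℂ ℂ ℂ) := by
  ext p
  refine ⟨fun hp => ?_, fun hp => ?_⟩
  · simpa [L4r] using congrArg Prod.snd (LinearMap.congr_fun hp (0, 1))
  · have hp₂ : p.2 = 0 := hp
    exact LinearMap.ext fun q => by simp [L4r, hp₂]

theorem leftAnnihilator_L4 (c : ℂ) :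
    leftAnnihilator (L4l c) (L4r c) = LinearMap.ker (LinearMap.snd ℂ ℂ ℂ) := by
  rw [leftAnnihilator, ker_L4l, ker_L4r, inf_idem]

theorem L4_der_zero_one_zero (c : ℂ) :
    (∀ d : (ℂ × ℂ) →ₗ[ℂ] (ℂ × ℂ), IsDer (L4l c) (L4r c) 0 1 0 d ↔
      ∃ d₁₁ d₁₂ : ℂ, d ((1 : ℂ), (0 : ℂ)) = (d₁₁, 0) ∧ d ((0 : ℂ), (1 : ℂ)) = (d₁₂, 0)) ∧
    Module.finrank ℂ (DerSub (L4l c) (L4r c) 0 1 0) = 2 := by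
  refine ⟨fun d => ?_, ?_⟩
  · rw [isDer_zero_one_zero_iff_forall_mem_leftAnnihilator, leftAnnihilator_L4,
      forall_apply_mem_ker_snd_iff]
  · rw [finrank_derSub_zero_one_zero, leftAnnihilator_L4, finrank_ker_snd, Module.finrank_prod,
      Module.finrank_self]
end
end

section
/- Let a, c ∈ ℂ with a ≠ 1, and let L⁵₂(a,c) be the left-symmetric dialgebra on ℂ² with basis e₁, e₂ and products e₂ ⊣ e₂ = c·e₁ + e₂, e₂ ⊢ e₁ = a·e₁, e₂ ⊢ e₂ = c·(1−a)·e₁ + e₂ (all other basis products zero). Then a linear map d : ℂ² → ℂ² is a (1,0,1)-derivation of L⁵₂(a,c) if and only if its matrix in the basis (e₁,e₂) has the form [[d₁₁, −c·d₁₁ + c·d₂₂],[0, d₂₂]] for some d₁₁, d₂₂ ∈ ℂ; in particular Der_{(1,0,1)}L⁵₂(a,c) has dimension 2. -/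
noncomputable section

/-- The left product `⊣` of the dialgebra, extended bilinearly from its values on the
basis `e₁ = (1,0)`, `e₂ = (0,1)` of `ℂ²`. -/
def L5l (a c : ℂ) : (ℂ × ℂ) →ₗ[ℂ] (ℂ × ℂ) →ₗ[ℂ] (ℂ × ℂ) :=
  LinearMap.mk₂ ℂ (fun p q => (c * p.2 * q.2, p.2 * q.2))
    (by intros; ext <;> simp <;> ring)
    (by intros; ext <;> simp <;> ring)
    (by intros; ext <;> simp <;> ring)
    (by intros; ext <;> simp <;> ring)

/-- The right product `⊢` of the dialgebra, extended bilinearly from its values on the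
basis `e₁ = (1,0)`, `e₂ = (0,1)` of `ℂ²`. -/
def L5r (a c : ℂ) : (ℂ × ℂ) →ₗ[ℂ] (ℂ × ℂ) →ₗ[ℂ] (ℂ × ℂ) :=
  LinearMap.mk₂ ℂ (fun p q => (a * p.2 * q.1 + c * (1 - a) * p.2 * q.2, p.2 * q.2))
    (by intros; ext <;> simp <;> ring)
    (by intros; ext <;> simp <;> ring)
    (by intros; ext <;> simp <;> ring)
    (by intros; ext <;> simp <;> ring)

/-!
A `(1,0,1)`-derivation is an endomorphism commuting with every left multiplication. In the dialgebra
`L⁵₂(a,c)` left multiplication by `e₂` under `⊣` is the projection `P` onto the line of `(c, 1)`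
along `e₁`, and under `⊢` it is `a (1 - P) + P`; left multiplication by a general `p` is `p.2` times
these. So the derivations are the centralizer of `P`, which is spanned by `1 - P` and `P`.
-/

section LeftMultiplication

variable {K S : Type*} [CommRing K] [AddCommGroup S] [Module K S]
  {la ra : S →ₗ[K] S →ₗ[K] S} {d : S →ₗ[K] S}

theorem isDer_one_zero_one_iff_forall_commute :
    IsDer la ra 1 0 1 d ↔ (∀ p, Commute d (la p)) ∧ ∀ p, Commute d (ra p) := by
  simp only [IsDer, one_smul, zero_smul, zero_add, commute_iff_eq, LinearMap.ext_iff,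
    Module.End.mul_apply]

theorem isDer_one_zero_one_iff_commute_of_mem_adjoin {p₀ : S}
    (hla : ∀ p, la p ∈ Algebra.adjoin K {la p₀}) (hra : ∀ p, ra p ∈ Algebra.adjoin K {la p₀}) :
    IsDer la ra 1 0 1 d ↔ Commute d (la p₀) := by
  rw [isDer_one_zero_one_iff_forall_commute]
  exact ⟨fun h => h.1 p₀, fun h =>
    ⟨fun p => Algebra.commute_of_mem_adjoin_singleton_of_commute (hla p) h,
      fun p => Algebra.commute_of_mem_adjoin_singleton_of_commute (hra p) h⟩⟩

end LeftMultiplication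

section ObliqueProjection

variable {K : Type*} [CommRing K]

/-- The projection of `K²` onto the line spanned by `(c, 1)` along the first coordinate axis. It is
left multiplication by `e₂` for the product `⊣` of `L⁵₂(a,c)`. -/
def obliqueProj (c : K) : Module.End K (K × K) :=
  (LinearMap.snd K K K).smulRight (c, 1)

theorem obliqueProj_apply (c : K) (q : K × K) : obliqueProj c q = (c * q.2, q.2) := by
  simp [obliqueProj, mul_comm]

theorem smul_one_sub_obliqueProj_add_smul_eq_iff (c x y : K) (d : Module.End K (K × K)) :
    x • (1 - obliqueProj c) + y • obliqueProj c = d ↔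
      d (1, 0) = (x, 0) ∧ d (0, 1) = (-c * x + c * y, y) := by
  have apply_e₁ : (x • (1 - obliqueProj c) + y • obliqueProj c) (1, 0) = (x, 0) := by
    simp [obliqueProj_apply]
  have apply_e₂ : (x • (1 - obliqueProj c) + y • obliqueProj c) (0, 1) =
      (-c * x + c * y, y) := by
    simp [obliqueProj_apply, mul_comm]
  constructor
  · rintro rfl
    exact ⟨apply_e₁, apply_e₂⟩
  · rintro ⟨h₁, h₂⟩
    ext1 <;> ext1
    · exact apply_e₁.trans h₁.symm
    · exact apply_e₂.trans h₂.symm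

theorem mem_span_one_sub_obliqueProj_iff (c : K) (d : Module.End K (K × K)) :
    d ∈ Submodule.span K {1 - obliqueProj c, obliqueProj c} ↔
      ∃ x y : K, d (1, 0) = (x, 0) ∧ d (0, 1) = (-c * x + c * y, y) := by
  simp only [Submodule.mem_span_pair, smul_one_sub_obliqueProj_add_smul_eq_iff]

theorem commute_obliqueProj_iff_mem_span (c : K) (d : Module.End K (K × K)) :
    Commute d (obliqueProj c) ↔ d ∈ Submodule.span K {1 - obliqueProj c, obliqueProj c} := by
  constructor
  · intro h
    have commute_apply (q : K × K) : d (obliqueProj c q) = obliqueProj c (d q) :=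
      LinearMap.congr_fun h q
    have snd_apply_e₁ : (d (1, 0)).2 = 0 := by
      simpa [obliqueProj_apply, ← Prod.zero_eq_mk] using
        (congrArg Prod.snd (commute_apply (1, 0))).symm
    have apply_range : d (c, 1) = (c * (d (0, 1)).2, (d (0, 1)).2) := by
      simpa [obliqueProj_apply] using commute_apply (0, 1)
    have e₂_eq : ((0, 1) : K × K) = (c, 1) - c • (1, 0) := by simp
    refine (mem_span_one_sub_obliqueProj_iff c d).2
      ⟨(d (1, 0)).1, (d (0, 1)).2, Prod.ext rfl snd_apply_e₁, Prod.ext ?_ rfl⟩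
    calc (d (0, 1)).1 = (d (c, 1)).1 - c * (d (1, 0)).1 := by
          rw [e₂_eq, map_sub, map_smul, Prod.fst_sub, Prod.smul_fst, smul_eq_mul]
      _ = -c * (d (1, 0)).1 + c * (d (0, 1)).2 := by rw [apply_range]; ring
  · rw [Submodule.mem_span_pair]
    rintro ⟨x, y, rfl⟩
    exact (((Commute.one_left _).sub_left (Commute.refl _)).smul_left x).add_left
      ((Commute.refl _).smul_left y)

theorem linearIndependent_one_sub_obliqueProj (c : K) :
    LinearIndependent K ![1 - obliqueProj c, obliqueProj c] := by
  refine LinearIndependent.pair_iff.2 fun x y h => ?_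
  obtain ⟨h₁, h₂⟩ := (smul_one_sub_obliqueProj_add_smul_eq_iff c x y 0).1 h
  exact ⟨(congrArg Prod.fst h₁).symm, (congrArg Prod.snd h₂).symm⟩

theorem finrank_span_one_sub_obliqueProj [Nontrivial K] (c : K) :
    Module.finrank K (Submodule.span K {1 - obliqueProj c, obliqueProj c}) = 2 := by
  rw [← Matrix.range_cons_cons_empty _ _ ![],
    finrank_span_eq_card (linearIndependent_one_sub_obliqueProj c), Fintype.card_fin]

end ObliqueProjection

section L5

variable {K : Type*} [CommRing K] {a c : K} {la ra : (K × K) →ₗ[K] (K × K) →ₗ[K] (K × K)}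

theorem isDer_L5_one_zero_one_iff_mem_span
    (hla : ∀ p q, la p q = (c * p.2 * q.2, p.2 * q.2))
    (hra : ∀ p q, ra p q = (a * p.2 * q.1 + c * (1 - a) * p.2 * q.2, p.2 * q.2))
    (d : (K × K) →ₗ[K] (K × K)) :
    IsDer la ra 1 0 1 d ↔ d ∈ Submodule.span K {1 - obliqueProj c, obliqueProj c} := by
  have la_eq (p : K × K) : la p = p.2 • obliqueProj c := by
    refine LinearMap.ext fun q => ?_
    simp only [hla, LinearMap.smul_apply, obliqueProj_apply, Prod.smul_mk, smul_eq_mul]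
    rw [mul_left_comm, mul_assoc]
  have ra_eq (p : K × K) : ra p = p.2 • (a • (1 - obliqueProj c) + obliqueProj c) := by
    refine LinearMap.ext fun q => Prod.ext ?_ ?_
    · simp only [hra, LinearMap.smul_apply, LinearMap.add_apply, LinearMap.sub_apply,
        Module.End.one_apply, obliqueProj_apply, Prod.smul_fst, Prod.fst_add, Prod.fst_sub,
        smul_eq_mul]
      ring
    · simp [hra, obliqueProj_apply]
  have la_e₂ : la (0, 1) = obliqueProj c := by rw [la_eq, one_smul]
  have proj_mem : obliqueProj c ∈ Algebra.adjoin K {la (0, 1)} :=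
    la_e₂ ▸ Algebra.self_mem_adjoin_singleton K _
  rw [← commute_obliqueProj_iff_mem_span, ← la_e₂]
  refine isDer_one_zero_one_iff_commute_of_mem_adjoin (fun p => ?_) (fun p => ?_)
  · exact la_eq p ▸ Subalgebra.smul_mem _ proj_mem _
  · exact ra_eq p ▸ Subalgebra.smul_mem _
      (add_mem (Subalgebra.smul_mem _ (sub_mem (one_mem _) proj_mem) _) proj_mem) _

theorem L5_der_one_zero_one_general [Nontrivial K]
    (hla : ∀ p q, la p q = (c * p.2 * q.2, p.2 * q.2))
    (hra : ∀ p q, ra p q = (a * p.2 * q.1 + c * (1 - a) * p.2 * q.2, p.2 * q.2)) :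
    (∀ d : (K × K) →ₗ[K] (K × K), IsDer la ra 1 0 1 d ↔
      ∃ d₁₁ d₂₂ : K, d (1, 0) = (d₁₁, 0) ∧ d (0, 1) = (-c * d₁₁ + c * d₂₂, d₂₂)) ∧
    Module.finrank K (DerSub la ra 1 0 1) = 2 := by
  have isDer_iff := isDer_L5_one_zero_one_iff_mem_span hla hra
  have derSub_eq : DerSub la ra 1 0 1 = Submodule.span K {1 - obliqueProj c, obliqueProj c} :=
    Submodule.ext isDer_iff
  refine ⟨fun d => (isDer_iff d).trans (mem_span_one_sub_obliqueProj_iff c d), ?_⟩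
  rw [derSub_eq, finrank_span_one_sub_obliqueProj]

end L5

theorem L5_der_one_zero_one (a c : ℂ) (ha : a ≠ 1) :
    (∀ d : (ℂ × ℂ) →ₗ[ℂ] (ℂ × ℂ), IsDer (L5l a c) (L5r a c) 1 0 1 d ↔
      ∃ d₁₁ d₂₂ : ℂ, d ((1 : ℂ), (0 : ℂ)) = (d₁₁, 0) ∧ d ((0 : ℂ), (1 : ℂ)) = (-c * d₁₁ + c * d₂₂, d₂₂)) ∧
    Module.finrank ℂ (DerSub (L5l a c) (L5r a c) 1 0 1) = 2 := by
  exact L5_der_one_zero_one_general (fun _ _ => rfl) (fun _ _ => rfl)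
end
end
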